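/- arXiv:math/0303024 — 2 statements merged into one kernel-verified Lean document; each statement's English description precedes it below -/
import Mathlib

section
/- A continuous function f : ℝ → ℂ belongs to 𝓖 if and only if there exists a bounded continuously differentiable function f̃ : ℂ → ℂ with f̃|_ℝ = f such that ∂f̃/∂z̄ has compact support and for every N ∈ ℕ there is a constant C with |∂f̃/∂z̄(z)| ≤ C·|Im z|^N for all z ∈ ℂ. -/
open MeasureTheory Complex

noncomputable section

/-- The Cauchy–Riemann operator `∂F/∂z̄ = (∂F/∂x + i ∂F/∂y)/2`. -/
def dbar (F : ℂ → ℂ) (z : ℂ) : ℂ :=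
  (fderiv ℝ F z 1 + Complex.I * fderiv ℝ F z Complex.I) / 2

/-- The space `𝓖` of smooth functions on `ℝ` which, for some `R > 0`, agree for
`|x| > R` with a bounded holomorphic function on `{|z| > R}`. -/
def MemG (f : ℝ → ℂ) : Prop :=
  ContDiff ℝ (⊤ : ℕ∞) f ∧ ∃ R : ℝ, 0 < R ∧ ∃ g : ℂ → ℂ,
    DifferentiableOn ℂ g {z : ℂ | R < ‖z‖} ∧
    (∃ M : ℝ, ∀ z : ℂ, R < ‖z‖ → ‖g z‖ ≤ M) ∧
    (∀ x : ℝ, R < |x| → g x = f x)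


/-! ### Basic facts about `dbar` -/

lemma dbar_mul {u v : ℂ → ℂ} {z : ℂ} (hu : DifferentiableAt ℝ u z) (hv : DifferentiableAt ℝ v z) :
    dbar (fun w => u w * v w) z = dbar u z * v z + u z * dbar v z := by
  unfold dbar
  rw [fderiv_fun_mul hu hv]
  simp
  ring

lemma dbar_add {u v : ℂ → ℂ} {z : ℂ} (hu : DifferentiableAt ℝ u z) (hv : DifferentiableAt ℝ v z) :
    dbar (fun w => u w + v w) z = dbar u z + dbar v z := by
  unfold dbar
  rw [fderiv_fun_add hu hv]
  simp
  ring

lemma dbar_one_sub {u : ℂ → ℂ} {z : ℂ} :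
    dbar (fun w => 1 - u w) z = - dbar u z := by
  unfold dbar
  rw [fderiv_const_sub]
  simp
  ring

lemma dbar_congr {u v : ℂ → ℂ} {z : ℂ} (h : u =ᶠ[nhds z] v) : dbar u z = dbar v z := by
  unfold dbar
  rw [h.fderiv_eq]

lemma dbar_const (c : ℂ) (z : ℂ) : dbar (fun _ => c) z = 0 := by
  simp [dbar]

lemma dbar_holo {u : ℂ → ℂ} {z : ℂ} (hu : DifferentiableAt ℂ u z) : dbar u z = 0 := by
  have h := (differentiableAt_complex_iff_differentiableAt_real.1 hu).2
  unfold dbar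
  rw [h, smul_eq_mul, ← mul_assoc, I_mul_I]
  ring

lemma holo_of_dbar {u : ℂ → ℂ} {z : ℂ} (hu : DifferentiableAt ℝ u z) (h : dbar u z = 0) :
    DifferentiableAt ℂ u z := by
  refine differentiableAt_complex_iff_differentiableAt_real.2 ⟨hu, ?_⟩
  unfold dbar at h
  have h2 : fderiv ℝ u z 1 + I * fderiv ℝ u z I = 0 := by
    simpa using h
  have h3 : I * (fderiv ℝ u z 1 + I * fderiv ℝ u z I) = 0 := by rw [h2, mul_zero]
  rw [mul_add, ← mul_assoc, I_mul_I] at h3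
  rw [smul_eq_mul]
  linear_combination -h3

lemma dbar_continuous {u : ℂ → ℂ} (hu : ContDiff ℝ 1 u) : Continuous (dbar u) := by
  have h := hu.continuous_fderiv one_ne_zero
  unfold dbar
  fun_prop

lemma dbar_compactSupport {u : ℂ → ℂ} (hu : HasCompactSupport u) : HasCompactSupport (dbar u) := by
  refine HasCompactSupport.intro hu (fun z hz => ?_)
  have : u =ᶠ[nhds z] fun _ => 0 := notMem_tsupport_iff_eventuallyEq.1 hz
  rw [dbar_congr this, dbar_const]

/-! ### Flat functions and almost analytic functions -/

/-- Vanishing to infinite order on the real axis. -/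
def Flat (p : ℂ → ℂ) : Prop := ∀ N : ℕ, ∃ C : ℝ, ∀ z : ℂ, ‖p z‖ ≤ C * |z.im| ^ N

/-- Bounded functions. -/
def Bdd (p : ℂ → ℂ) : Prop := ∃ M : ℝ, ∀ z : ℂ, ‖p z‖ ≤ M

lemma Flat.add {p q : ℂ → ℂ} (hp : Flat p) (hq : Flat q) : Flat (fun z => p z + q z) := by
  intro N
  obtain ⟨C, hC⟩ := hp N
  obtain ⟨D, hD⟩ := hq N
  refine ⟨C + D, fun z => ?_⟩
  rw [add_mul]
  exact (norm_add_le _ _).trans (add_le_add (hC z) (hD z))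

lemma Flat.mono {p q : ℂ → ℂ} (hp : Flat p) (M : ℝ) (h : ∀ z, ‖q z‖ ≤ M * ‖p z‖) : Flat q := by
  intro N
  obtain ⟨C, hC⟩ := hp N
  refine ⟨|M| * C, fun z => ?_⟩
  calc ‖q z‖ ≤ M * ‖p z‖ := h z
    _ ≤ |M| * ‖p z‖ := by gcongr; exact le_abs_self M
    _ ≤ |M| * (C * |z.im| ^ N) := by gcongr; exact hC z
    _ = _ := by ring

lemma Flat.bdd_mul {p q : ℂ → ℂ} (hp : Flat p) (hq : Bdd q) : Flat (fun z => q z * p z) := by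
  obtain ⟨M, hM⟩ := hq
  refine hp.mono M (fun z => ?_)
  rw [norm_mul]
  gcongr
  exact hM z

lemma Bdd.mul {p q : ℂ → ℂ} (hp : Bdd p) (hq : Bdd q) : Bdd (fun z => p z * q z) := by
  obtain ⟨M, hM⟩ := hp
  obtain ⟨M', hM'⟩ := hq
  refine ⟨M * M', fun z => ?_⟩
  rw [norm_mul]
  have := (norm_nonneg _).trans (hM z)
  gcongr
  exacts [hM z, hM' z]

lemma Bdd.add {p q : ℂ → ℂ} (hp : Bdd p) (hq : Bdd q) : Bdd (fun z => p z + q z) := by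
  obtain ⟨M, hM⟩ := hp
  obtain ⟨M', hM'⟩ := hq
  exact ⟨M + M', fun z => (norm_add_le _ _).trans (add_le_add (hM z) (hM' z))⟩

lemma bdd_of_compactSupport {p : ℂ → ℂ} (hp : Continuous p) (h : HasCompactSupport p) : Bdd p :=
  h.exists_bound_of_continuous hp

/-- Bounded almost analytic `C¹` functions. -/
structure AA (u : ℂ → ℂ) : Prop where
  smooth : ContDiff ℝ 1 u
  bdd : Bdd u
  flat : Flat (dbar u)

lemma AA.diff {u : ℂ → ℂ} (hu : AA u) (z : ℂ) : DifferentiableAt ℝ u z :=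
  (hu.smooth.differentiable one_ne_zero) z

lemma AA.mul {u v : ℂ → ℂ} (hu : AA u) (hv : AA v) : AA (fun z => u z * v z) := by
  refine ⟨hu.smooth.mul hv.smooth, hu.bdd.mul hv.bdd, ?_⟩
  have : dbar (fun z => u z * v z) = fun z => v z * dbar u z + u z * dbar v z := by
    funext z
    rw [dbar_mul (hu.diff z) (hv.diff z)]
    ring
  rw [this]
  exact (hu.flat.bdd_mul hv.bdd).add (hv.flat.bdd_mul hu.bdd)

lemma AA.add {u v : ℂ → ℂ} (hu : AA u) (hv : AA v) : AA (fun z => u z + v z) := by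
  refine ⟨hu.smooth.add hv.smooth, hu.bdd.add hv.bdd, ?_⟩
  have : dbar (fun z => u z + v z) = fun z => dbar u z + dbar v z := by
    funext z
    rw [dbar_add (hu.diff z) (hv.diff z)]
  rw [this]
  exact hu.flat.add hv.flat

/-! ### Fourier-analytic almost analytic extension -/

open scoped FourierTransform in
lemma moment {h : ℝ → ℂ} (hs : ContDiff ℝ (⊤ : ℕ∞) h) (hc : HasCompactSupport h) (n : ℕ) (x : ℝ) :
    ∫ ξ : ℝ, 𝓕 h ξ * cexp (2 * Real.pi * I * x * ξ) * (2 * Real.pi * I * ξ) ^ n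
      = iteratedDeriv n h x := by
  have hs' : ∀ k : ℕ, ContDiff ℝ (⊤ : ℕ∞) (iteratedDeriv k h) := fun k => by
    rw [iteratedDeriv_eq_iterate]; exact hs.iterate_deriv k
  have hc' : ∀ k : ℕ, HasCompactSupport (iteratedDeriv k h) := by
    intro k
    induction k with
    | zero => simpa using hc
    | succ k ih => rw [iteratedDeriv_succ]; exact ih.deriv
  let S : SchwartzMap ℝ ℂ := (hc' n).toSchwartzMap (hs' n)
  have hS : (S : ℝ → ℂ) = iteratedDeriv n h := rfl
  have hinv : 𝓕⁻ (𝓕 (S : ℝ → ℂ)) = (S : ℝ → ℂ) :=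
    S.continuous.fourierInv_fourier_eq S.integrable (𝓕 S).integrable
  have hF : 𝓕 (iteratedDeriv n h) = fun ξ : ℝ => (2 * Real.pi * I * ξ) ^ n • 𝓕 h ξ := by
    refine Real.fourier_iteratedDeriv (N := ⊤) hs (fun k _ => ?_) le_top
    exact (hs' k).continuous.integrable_of_hasCompactSupport (hc' k)
  have := congrFun hinv x
  rw [hS, hF, Real.fourierInv_eq'] at this
  rw [← this]
  congr 1
  funext ξ
  simp only [smul_eq_mul, RCLike.inner_apply, conj_trivial]
  push_cast
  ring_nf

/-- The multiplier. -/
structure Mult (m m' : ℝ → ℂ) : Prop where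
  cont : Continuous m
  cont' : Continuous m'
  der : ∀ t, HasDerivAt m (m' t) t
  bdd : ∃ B : ℝ, 0 ≤ B ∧ ∀ t, ‖m t‖ ≤ B
  bdd' : ∃ B : ℝ, 0 ≤ B ∧ ∀ t, ‖m' t‖ ≤ B
  eq : ∀ t : ℝ, |t| < 1 → m t = cexp (-(2 * Real.pi * t))

lemma exists_mult : ∃ m m' : ℝ → ℂ, Mult m m' := by
  let χ : ContDiffBump (0 : ℝ) := ⟨1, 2, one_pos, one_lt_two⟩
  let m : ℝ → ℂ := fun t => (χ t : ℂ) * cexp (-(2 * Real.pi * t))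
  have hm : ContDiff ℝ 1 m := by
    refine ContDiff.mul (ofRealCLM.contDiff.comp χ.contDiff) ?_
    refine ContDiff.cexp (ContDiff.neg (contDiff_const.mul ofRealCLM.contDiff))
  have hmc : HasCompactSupport m := by
    refine HasCompactSupport.mul_right ?_
    exact χ.hasCompactSupport.comp_left (g := ((↑) : ℝ → ℂ)) ofReal_zero
  have hd : Continuous (deriv m) := hm.continuous_deriv le_rfl
  refine ⟨m, deriv m, hm.continuous, hd, ?_, ?_, ?_, ?_⟩
  · intro t
    exact ((hm.differentiable one_ne_zero) t).hasDerivAt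
  · obtain ⟨B, hB⟩ := hmc.exists_bound_of_continuous hm.continuous
    exact ⟨B, (norm_nonneg _).trans (hB 0), hB⟩
  · obtain ⟨B, hB⟩ := hmc.deriv.exists_bound_of_continuous hd
    exact ⟨B, (norm_nonneg _).trans (hB 0), hB⟩
  · intro t ht
    have : χ t = 1 := χ.one_of_mem_closedBall (by simpa [χ] using ht.le)
    simp [m, this]

lemma Mult.flat {m m' : ℝ → ℂ} (hm : Mult m m') (N : ℕ) :
    ∃ C : ℝ, ∀ t, ‖2 * Real.pi * m t + m' t‖ ≤ C * |t| ^ N := by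
  obtain ⟨B, hB0, hB⟩ := hm.bdd
  obtain ⟨B', hB0', hB'⟩ := hm.bdd'
  refine ⟨2 * Real.pi * B + B', fun t => ?_⟩
  have hpi := Real.pi_pos
  rcases lt_or_ge |t| 1 with ht | ht
  · have h1 : m =ᶠ[nhds t] fun s : ℝ => cexp (-(2 * Real.pi * s)) := by
      have : ∀ᶠ s : ℝ in nhds t, |s| < 1 := continuous_abs.continuousAt.eventually_lt_const ht
      filter_upwards [this] with s hs using hm.eq s hs
    have h2 : HasDerivAt (fun s : ℝ => cexp (-(2 * Real.pi * s)))
        (cexp (-(2 * Real.pi * t)) * (-(2 * Real.pi * 1))) t :=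
      HasDerivAt.cexp (HasDerivAt.neg (HasDerivAt.const_mul _ (hasDerivAt_id t).ofReal_comp))
    have h3 := (hm.der t).unique (h2.congr_of_eventuallyEq h1)
    rw [h3, hm.eq t ht]
    have : 2 * (Real.pi : ℂ) * cexp (-(2 * Real.pi * t)) +
      cexp (-(2 * Real.pi * t)) * (-(2 * Real.pi * 1)) = 0 := by ring
    rw [this, norm_zero]
    positivity
  · calc ‖2 * Real.pi * m t + m' t‖ ≤ ‖2 * Real.pi * m t‖ + ‖m' t‖ := norm_add_le _ _
      _ = 2 * Real.pi * ‖m t‖ + ‖m' t‖ := by simp [abs_of_pos hpi]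
      _ ≤ (2 * Real.pi * B + B') * 1 := by
          rw [mul_one]; gcongr
          exacts [hB t, hB' t]
      _ ≤ _ := by gcongr; exact one_le_pow₀ ht

lemma Mult.taylor {m m' : ℝ → ℂ} (hm : Mult m m') (N : ℕ) :
    ∃ C : ℝ, ∀ t : ℝ, ‖m t - ∑ n ∈ Finset.range N, (-(2 * Real.pi * t) : ℂ) ^ n / n.factorial‖
      ≤ C * |t| ^ N := by
  obtain ⟨B, hB0, hB⟩ := hm.bdd
  have hpi := Real.pi_pos
  set S : ℝ := ∑ n ∈ Finset.range N, (2 * Real.pi) ^ n / n.factorial with hS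
  have hS0 : 0 ≤ S := Finset.sum_nonneg (fun n _ => by positivity)
  refine ⟨(2 * Real.pi) ^ N * Real.exp (2 * Real.pi) + (B + S), fun t => ?_⟩
  have hn : ‖(-(2 * Real.pi * t) : ℂ)‖ = 2 * Real.pi * |t| := by
    simp [abs_of_pos hpi]
  rcases lt_or_ge |t| 1 with ht | ht
  · rw [hm.eq t ht]
    refine (norm_exp_sub_sum_le_norm_mul_exp _ N).trans ?_
    rw [hn, mul_pow, add_mul]
    have : Real.exp (2 * Real.pi * |t|) ≤ Real.exp (2 * Real.pi) := by
      apply Real.exp_le_exp.2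
      nlinarith
    calc (2 * Real.pi) ^ N * |t| ^ N * Real.exp (2 * Real.pi * |t|)
        ≤ (2 * Real.pi) ^ N * |t| ^ N * Real.exp (2 * Real.pi) := by gcongr
      _ = (2 * Real.pi) ^ N * Real.exp (2 * Real.pi) * |t| ^ N := by ring
      _ ≤ _ := by
        have : 0 ≤ (B + S) * |t| ^ N := by positivity
        linarith
  · have h1 : (1 : ℝ) ≤ |t| ^ N := one_le_pow₀ ht
    have h2 : ‖∑ n ∈ Finset.range N, (-(2 * Real.pi * t) : ℂ) ^ n / n.factorial‖ ≤ S * |t| ^ N := by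
      refine (norm_sum_le _ _).trans ?_
      rw [hS, Finset.sum_mul]
      refine Finset.sum_le_sum (fun n hnN => ?_)
      rw [norm_div, norm_pow, hn, mul_pow, norm_natCast, mul_div_right_comm]
      gcongr
      exact (Finset.mem_range.1 hnN).le
    calc _ ≤ ‖m t‖ + ‖∑ n ∈ Finset.range N, (-(2 * Real.pi * t) : ℂ) ^ n / n.factorial‖ :=
          norm_sub_le _ _
      _ ≤ B * |t| ^ N + S * |t| ^ N := by
          gcongr
          exact (hB t).trans (le_mul_of_one_le_right hB0 h1)
      _ = (B + S) * |t| ^ N := by ring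
      _ ≤ _ := by
          have h3 : 0 ≤ (2 * Real.pi) ^ N * Real.exp (2 * Real.pi) := by positivity
          refine mul_le_mul_of_nonneg_right ?_ (by positivity)
          linarith

/-- The integrand of the extension. -/
def ker (a m : ℝ → ℂ) (z : ℂ) (ξ : ℝ) : ℂ :=
  a ξ * cexp (2 * Real.pi * I * (z.re : ℂ) * ξ) * m (z.im * ξ)

/-- The derivative of the integrand of the extension. -/
def ker' (a m m' : ℝ → ℂ) (z : ℂ) (ξ : ℝ) : ℂ →L[ℝ] ℂ :=
  (a ξ * cexp (2 * Real.pi * I * (z.re : ℂ) * ξ) * (ξ * (2 * Real.pi * I * m (z.im * ξ)))) •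
      (ofRealCLM.comp reCLM) +
  (a ξ * cexp (2 * Real.pi * I * (z.re : ℂ) * ξ) * (ξ * m' (z.im * ξ))) •
      (ofRealCLM.comp imCLM)

/-- The Fourier almost analytic extension. -/
def EE (a m : ℝ → ℂ) (z : ℂ) : ℂ := ∫ ξ : ℝ, ker a m z ξ

lemma norm_osc (x ξ : ℝ) : ‖cexp (2 * Real.pi * I * (x : ℂ) * ξ)‖ = 1 := by
  have : (2 * Real.pi * I * (x : ℂ) * ξ : ℂ) = ((2 * Real.pi * x * ξ : ℝ) : ℂ) * I := by
    push_cast; ring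
  rw [this, norm_exp_ofReal_mul_I]

/-- Rapidly decaying continuous functions. -/
structure Rapid (a : ℝ → ℂ) : Prop where
  cont : Continuous a
  int : ∀ n : ℕ, Integrable (fun ξ : ℝ => |ξ| ^ n * ‖a ξ‖)

section
variable {a m m' : ℝ → ℂ}

lemma ker_cont (ha : Rapid a) (hm : Mult m m') (z : ℂ) : Continuous (ker a m z) := by
  have h1 := ha.cont
  have h2 := hm.cont
  unfold ker
  fun_prop

lemma ker_norm (z : ℂ) (ξ : ℝ) : ‖ker a m z ξ‖ = ‖a ξ‖ * ‖m (z.im * ξ)‖ := by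
  rw [ker, norm_mul, norm_mul, norm_osc, mul_one]

lemma ker_integrable (ha : Rapid a) (hm : Mult m m') (z : ℂ) : Integrable (ker a m z) := by
  obtain ⟨B, hB0, hB⟩ := hm.bdd
  refine Integrable.mono' ((ha.int 0).const_mul B) (ker_cont ha hm z).aestronglyMeasurable
    (Filter.Eventually.of_forall fun ξ => ?_)
  rw [ker_norm, pow_zero, one_mul, mul_comm]
  gcongr
  exact hB _

lemma ker'_cont (ha : Rapid a) (hm : Mult m m') :
    Continuous (fun p : ℂ × ℝ => ker' a m m' p.1 p.2) := by
  have h1 := ha.cont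
  have h2 := hm.cont
  have h3 := hm.cont'
  have h4 : Continuous fun p : ℂ × ℝ => p.1.re := continuous_re.comp continuous_fst
  have h5 : Continuous fun p : ℂ × ℝ => p.1.im := continuous_im.comp continuous_fst
  unfold ker'
  fun_prop

lemma ker'_cont_left (ha : Rapid a) (hm : Mult m m') (ξ : ℝ) :
    Continuous (fun z => ker' a m m' z ξ) := by
  have h1 := ha.cont
  have h2 := hm.cont
  have h3 := hm.cont'
  have h4 : Continuous fun z : ℂ => z.re := continuous_re
  have h5 : Continuous fun z : ℂ => z.im := continuous_im
  unfold ker'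
  fun_prop

lemma ker'_bound (hm : Mult m m') : ∃ B : ℝ, ∀ z ξ, ‖ker' a m m' z ξ‖ ≤ B * (|ξ| ^ 1 * ‖a ξ‖) := by
  obtain ⟨B, hB0, hB⟩ := hm.bdd
  obtain ⟨B', hB0', hB'⟩ := hm.bdd'
  have hpi := Real.pi_pos
  refine ⟨2 * Real.pi * B * ‖ofRealCLM.comp reCLM‖ + B' * ‖ofRealCLM.comp imCLM‖, fun z ξ => ?_⟩
  unfold ker'
  refine (norm_add_le _ _).trans ?_
  rw [norm_smul, norm_smul]
  simp only [norm_mul, norm_osc, norm_real, Real.norm_eq_abs, norm_I, abs_of_pos hpi, norm_ofNat,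
    mul_one, pow_one]
  have e1 := hB (z.im * ξ)
  have e2 := hB' (z.im * ξ)
  calc _ ≤ ‖a ξ‖ * (|ξ| * (2 * Real.pi * B)) * ‖ofRealCLM.comp reCLM‖ +
        ‖a ξ‖ * (|ξ| * B') * ‖ofRealCLM.comp imCLM‖ := by gcongr
    _ = _ := by ring

lemma ker_hasFDeriv (hm : Mult m m') (z : ℂ) (ξ : ℝ) :
    HasFDerivAt (fun w => ker a m w ξ) (ker' a m m' z ξ) z := by
  have h1 : HasFDerivAt (fun w : ℂ => (w.re : ℂ)) (ofRealCLM.comp reCLM) z :=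
    (ofRealCLM.comp reCLM).hasFDerivAt
  have h2 : HasFDerivAt (fun w : ℂ => w.im * ξ) (ξ • imCLM) z :=
    (imCLM.hasFDerivAt).mul_const ξ
  have h3 := (hm.der (z.im * ξ)).hasFDerivAt.comp z h2
  have h4 := (((h1.const_mul (2 * Real.pi * I)).mul_const (ξ : ℂ)).cexp.const_mul (a ξ)).mul h3
  refine h4.congr_fderiv ?_
  ext v
  simp [ker']
  ring

lemma EE_hasFDeriv (ha : Rapid a) (hm : Mult m m') (z : ℂ) :
    HasFDerivAt (EE a m) (∫ ξ, ker' a m m' z ξ) z := by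
  obtain ⟨B, hB⟩ := ker'_bound (a := a) hm
  refine hasFDerivAt_integral_of_dominated_of_fderiv_le (s := Set.univ) (F := ker a m)
    (bound := fun ξ => B * (|ξ| ^ 1 * ‖a ξ‖)) Filter.univ_mem
    (Filter.Eventually.of_forall fun w => (ker_cont ha hm w).aestronglyMeasurable)
    (ker_integrable ha hm z) ?_ (Filter.Eventually.of_forall fun ξ w _ => hB w ξ)
    ((ha.int 1).const_mul B) (Filter.Eventually.of_forall fun ξ w _ => ker_hasFDeriv hm w ξ)
  exact ((ker'_cont ha hm).comp (Continuous.prodMk_right z)).aestronglyMeasurable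

lemma ker'_integrable (ha : Rapid a) (hm : Mult m m') (z : ℂ) : Integrable (ker' a m m' z) := by
  obtain ⟨B, hB⟩ := ker'_bound (a := a) hm
  exact Integrable.mono' ((ha.int 1).const_mul B)
    ((ker'_cont ha hm).comp (Continuous.prodMk_right z)).aestronglyMeasurable
    (Filter.Eventually.of_forall fun ξ => hB z ξ)

lemma EE_contDiff (ha : Rapid a) (hm : Mult m m') : ContDiff ℝ 1 (EE a m) := by
  obtain ⟨B, hB⟩ := ker'_bound (a := a) hm
  have hcont : Continuous (fun z => ∫ ξ, ker' a m m' z ξ) := by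
    refine continuous_of_dominated (F := fun z ξ => ker' a m m' z ξ)
      (bound := fun ξ => B * (|ξ| ^ 1 * ‖a ξ‖))
      (fun z => (ker'_integrable ha hm z).aestronglyMeasurable)
      (fun z => Filter.Eventually.of_forall fun ξ => hB z ξ) ((ha.int 1).const_mul B)
      (Filter.Eventually.of_forall fun ξ => ?_)
    exact ker'_cont_left ha hm ξ
  exact contDiff_one_iff_hasFDerivAt.2 ⟨_, hcont, EE_hasFDeriv ha hm⟩

lemma EE_bdd (hm : Mult m m') (ha : Rapid a) : Bdd (EE a m) := by
  obtain ⟨B, hB0, hB⟩ := hm.bdd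
  refine ⟨∫ ξ, B * (|ξ| ^ 0 * ‖a ξ‖), fun z => ?_⟩
  refine norm_integral_le_of_norm_le ((ha.int 0).const_mul B)
    (Filter.Eventually.of_forall fun ξ => ?_)
  rw [ker_norm, pow_zero, one_mul, mul_comm]
  gcongr
  exact hB _

lemma EE_dbar (ha : Rapid a) (hm : Mult m m') (z : ℂ) :
    dbar (EE a m) z = ∫ ξ : ℝ, a ξ * cexp (2 * Real.pi * I * (z.re : ℂ) * ξ) *
      (I / 2 * ξ * (2 * Real.pi * m (z.im * ξ) + m' (z.im * ξ))) := by
  have hi := ker'_integrable ha hm z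
  unfold dbar
  rw [(EE_hasFDeriv ha hm z).fderiv, ContinuousLinearMap.integral_apply hi,
    ContinuousLinearMap.integral_apply hi, ← integral_const_mul, ← integral_add, ← integral_div]
  · congr 1
    funext ξ
    simp [ker']
    ring
  · exact hi.apply_continuousLinearMap 1
  · exact (hi.apply_continuousLinearMap I).const_mul I

lemma EE_flat (ha : Rapid a) (hm : Mult m m') : Flat (dbar (EE a m)) := by
  intro N
  obtain ⟨C, hC⟩ := hm.flat N
  refine ⟨∫ ξ, C * (|ξ| ^ (N + 1) * ‖a ξ‖), fun z => ?_⟩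
  rw [EE_dbar ha hm, ← integral_mul_const]
  refine norm_integral_le_of_norm_le (((ha.int (N + 1)).const_mul C).mul_const _)
    (Filter.Eventually.of_forall fun ξ => ?_)
  rw [norm_mul, norm_mul, norm_osc, mul_one, norm_mul, norm_mul, norm_div, norm_I, norm_real,
    Real.norm_eq_abs, norm_ofNat]
  have h := hC (z.im * ξ)
  rw [abs_mul, mul_pow] at h
  have h0 := (norm_nonneg _).trans h
  calc _ ≤ ‖a ξ‖ * (1 * |ξ| * (C * (|z.im| ^ N * |ξ| ^ N))) := by
        gcongr; norm_num
    _ = _ := by ring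

end

lemma EE_AA {a m m' : ℝ → ℂ} (ha : Rapid a) (hm : Mult m m') : AA (EE a m) :=
  ⟨EE_contDiff ha hm, EE_bdd hm ha, EE_flat ha hm⟩

open scoped FourierTransform in
lemma rapid_fourier {h : ℝ → ℂ} (hs : ContDiff ℝ (⊤ : ℕ∞) h) (hc : HasCompactSupport h) :
    Rapid (𝓕 h) := by
  let S : SchwartzMap ℝ ℂ := hc.toSchwartzMap hs
  have hS : ((𝓕 S : SchwartzMap ℝ ℂ) : ℝ → ℂ) = 𝓕 h := rfl
  refine ⟨hS ▸ (𝓕 S).continuous, fun n => ?_⟩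
  have := (𝓕 S).integrable_pow_mul volume n
  rw [← hS]
  simpa using this

open scoped FourierTransform in
lemma EE_taylor {h m m' : ℝ → ℂ} (hs : ContDiff ℝ (⊤ : ℕ∞) h) (hc : HasCompactSupport h)
    (hm : Mult m m') (N : ℕ) : ∃ C : ℝ, ∀ z : ℂ,
      ‖EE (𝓕 h) m z - ∑ n ∈ Finset.range N,
        (I * z.im) ^ n / n.factorial * iteratedDeriv n h z.re‖ ≤ C * |z.im| ^ N := by
  have ha := rapid_fourier hs hc
  obtain ⟨C, hC⟩ := hm.taylor N
  refine ⟨∫ ξ, C * (|ξ| ^ N * ‖𝓕 h ξ‖), fun z => ?_⟩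
  have hIntg : ∀ n : ℕ, Integrable (fun ξ : ℝ => (I * z.im) ^ n / n.factorial *
      (𝓕 h ξ * cexp (2 * Real.pi * I * (z.re : ℂ) * ξ) * (2 * Real.pi * I * ξ) ^ n)) := by
    intro n
    refine Integrable.const_mul ?_ _
    refine Integrable.mono' ((ha.int n).const_mul ((2 * Real.pi) ^ n)) ?_
      (Filter.Eventually.of_forall fun ξ => ?_)
    · have := ha.cont
      exact Continuous.aestronglyMeasurable (by fun_prop)
    · rw [norm_mul, norm_mul, norm_osc, mul_one, norm_pow]
      simp only [norm_mul, norm_real, Real.norm_eq_abs, norm_I, abs_of_pos Real.pi_pos, norm_ofNat,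
        mul_one, mul_pow]
      apply le_of_eq
      ring
  have e1 : ∑ n ∈ Finset.range N, (I * z.im) ^ n / n.factorial * iteratedDeriv n h z.re =
      ∫ ξ : ℝ, ∑ n ∈ Finset.range N, (I * z.im) ^ n / n.factorial *
      (𝓕 h ξ * cexp (2 * Real.pi * I * (z.re : ℂ) * ξ) * (2 * Real.pi * I * ξ) ^ n) := by
    rw [integral_finsetSum _ (fun n _ => hIntg n)]
    refine Finset.sum_congr rfl (fun n _ => ?_)
    rw [integral_const_mul, moment hs hc]
  rw [e1, EE, ← integral_sub (ker_integrable ha hm z) (integrable_finsetSum _ (fun n _ => hIntg n)),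
    ← integral_mul_const]
  refine norm_integral_le_of_norm_le (((ha.int N).const_mul C).mul_const _)
    (Filter.Eventually.of_forall fun ξ => ?_)
  have e2 : ker (𝓕 h) m z ξ - ∑ n ∈ Finset.range N, (I * z.im) ^ n / n.factorial *
      (𝓕 h ξ * cexp (2 * Real.pi * I * (z.re : ℂ) * ξ) * (2 * Real.pi * I * ξ) ^ n) =
      𝓕 h ξ * cexp (2 * Real.pi * I * (z.re : ℂ) * ξ) *
      (m (z.im * ξ) - ∑ n ∈ Finset.range N,
        (-(2 * Real.pi * (z.im * ξ : ℝ)) : ℂ) ^ n / n.factorial) := by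
    rw [mul_sub, ker, Finset.mul_sum]
    congr 1
    refine Finset.sum_congr rfl (fun n _ => ?_)
    have : (-(2 * Real.pi * (z.im * ξ : ℝ)) : ℂ) = (I * z.im) * (2 * Real.pi * I * ξ) := by
      push_cast
      linear_combination (-(2 * Real.pi * z.im * ξ) : ℂ) * I_mul_I
    rw [this, mul_pow]
    ring
  rw [e2, norm_mul, norm_mul, norm_osc, mul_one]
  have hk := hC (z.im * ξ)
  rw [abs_mul, mul_pow] at hk
  calc _ ≤ ‖𝓕 h ξ‖ * (C * (|z.im| ^ N * |ξ| ^ N)) := by gcongr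
    _ = _ := by ring

open scoped FourierTransform in
lemma EE_real {h m m' : ℝ → ℂ} (hs : ContDiff ℝ (⊤ : ℕ∞) h) (hc : HasCompactSupport h)
    (hm : Mult m m') (x : ℝ) : EE (𝓕 h) m x = h x := by
  have := moment hs hc 0 x
  have hm0 : m 0 = 1 := by simpa using hm.eq 0 (by simp)
  simpa [EE, ker, hm0] using this

/-- Near points where `h` is locally constant the extension is flat. -/
lemma iteratedDeriv_locConst {h : ℝ → ℂ} {x : ℝ} {c : ℂ} (hx : h =ᶠ[nhds x] fun _ => c) (n : ℕ) :
    iteratedDeriv n h x = if n = 0 then c else 0 := by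
  rw [hx.iteratedDeriv_eq, iteratedDeriv_const]

open scoped FourierTransform in
lemma EE_locConst {h m m' : ℝ → ℂ} (hs : ContDiff ℝ (⊤ : ℕ∞) h) (hc : HasCompactSupport h)
    (hm : Mult m m') (N : ℕ) : ∃ C : ℝ, ∀ (z c : ℂ), (h =ᶠ[nhds z.re] fun _ => c) →
      ‖EE (𝓕 h) m z - c‖ ≤ C * |z.im| ^ N := by
  rcases Nat.eq_zero_or_pos N with rfl | hN
  · obtain ⟨B, hB⟩ := EE_bdd hm (rapid_fourier hs hc)
    obtain ⟨D, hD⟩ := hc.exists_bound_of_continuous hs.continuous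
    refine ⟨B + D, fun z c hz => ?_⟩
    have : h z.re = c := hz.self_of_nhds
    rw [pow_zero, mul_one, ← this]
    exact (norm_sub_le _ _).trans (add_le_add (hB z) (hD _))
  obtain ⟨C, hC⟩ := EE_taylor hs hc hm N
  refine ⟨C, fun z c hz => ?_⟩
  have := hC z
  rw [Finset.sum_eq_single 0] at this
  · simpa [hz.self_of_nhds] using this
  · intro n _ hn
    rw [iteratedDeriv_locConst hz, if_neg hn, mul_zero]
  · intro h0
    exact absurd (Finset.mem_range.2 hN) h0

/-! ### Almost analytic cutoff functions -/

open scoped FourierTransform in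
lemma exists_cutoff (R : ℝ) (hR : 0 < R) : ∃ φ : ℂ → ℂ, AA φ ∧ HasCompactSupport φ ∧
    (∀ z : ℂ, ‖z‖ ≤ R → φ z = 1) ∧ ContDiff ℝ (⊤ : ℕ∞) (fun x : ℝ => φ x) := by
  obtain ⟨m, m', hm⟩ := exists_mult
  let b : ContDiffBump (0 : ℝ) := ⟨R + 1, R + 2, by linarith, by linarith⟩
  let p : ContDiffBump (0 : ℂ) := ⟨R, R + 1 / 2, hR, by linarith⟩
  let ψ : ContDiffBump (0 : ℂ) := ⟨R + 3, R + 4, by linarith, by linarith⟩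
  let h : ℝ → ℂ := fun x => (b x : ℂ)
  have hs : ContDiff ℝ (⊤ : ℕ∞) h := ofRealCLM.contDiff.comp b.contDiff
  have hc : HasCompactSupport h :=
    b.hasCompactSupport.comp_left (g := ((↑) : ℝ → ℂ)) ofReal_zero
  have hE := EE_AA (rapid_fourier hs hc) hm
  have hreal := EE_real hs hc hm
  have hloc := EE_locConst hs hc hm
  set E := EE (𝓕 h) m
  let P : ℂ → ℂ := fun z => (p z : ℂ)
  let Ψ : ℂ → ℂ := fun z => (ψ z : ℂ)
  have hP : ContDiff ℝ (⊤ : ℕ∞) P := ofRealCLM.contDiff.comp p.contDiff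
  have hΨ : ContDiff ℝ (⊤ : ℕ∞) Ψ := ofRealCLM.contDiff.comp ψ.contDiff
  have hPc : HasCompactSupport P :=
    p.hasCompactSupport.comp_left (g := ((↑) : ℝ → ℂ)) ofReal_zero
  have hΨc : HasCompactSupport Ψ :=
    ψ.hasCompactSupport.comp_left (g := ((↑) : ℝ → ℂ)) ofReal_zero
  have hP1 : ContDiff ℝ 1 P := hP.of_le (by exact_mod_cast le_top)
  have hΨ1 : ContDiff ℝ 1 Ψ := hΨ.of_le (by exact_mod_cast le_top)
  have hPb := bdd_of_compactSupport hP.continuous hPc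
  have hΨb := bdd_of_compactSupport hΨ.continuous hΨc
  have hPb' := bdd_of_compactSupport (dbar_continuous hP1) (dbar_compactSupport hPc)
  have hΨb' := bdd_of_compactSupport (dbar_continuous hΨ1) (dbar_compactSupport hΨc)
  have hPone : ∀ z : ℂ, ‖z‖ ≤ R → P z = 1 := by
    intro z hz
    have : p z = 1 := p.one_of_mem_closedBall (by simpa [p] using hz)
    simp [P, this]
  have hPzero : ∀ z : ℂ, R + 1 / 2 ≤ ‖z‖ → P z = 0 := by
    intro z hz
    have : p z = 0 := p.zero_of_le_dist (by simpa [p] using hz)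
    simp [P, this]
  have hΨone : ∀ z : ℂ, ‖z‖ ≤ R + 3 → Ψ z = 1 := by
    intro z hz
    have : ψ z = 1 := ψ.one_of_mem_closedBall (by simpa [ψ] using hz)
    simp [Ψ, this]
  have hdP : ∀ z : ℂ, R + 1 / 2 < ‖z‖ → dbar P z = 0 := by
    intro z hz
    have : P =ᶠ[nhds z] fun _ => 0 := by
      have : ∀ᶠ w : ℂ in nhds z, R + 1 / 2 < ‖w‖ := continuous_norm.continuousAt.eventually_const_lt hz
      filter_upwards [this] with w hw using hPzero w hw.le
    rw [dbar_congr this, dbar_const]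
  have hdΨ : ∀ z : ℂ, ‖z‖ < R + 3 → dbar Ψ z = 0 := by
    intro z hz
    have : Ψ =ᶠ[nhds z] fun _ => 1 := by
      have : ∀ᶠ w : ℂ in nhds z, ‖w‖ < R + 3 := continuous_norm.continuousAt.eventually_lt_const hz
      filter_upwards [this] with w hw using hΨone w hw.le
    rw [dbar_congr this, dbar_const]
  have hh1 : ∀ x : ℝ, |x| < R + 1 → h =ᶠ[nhds x] fun _ => 1 := by
    intro x hx
    have : ∀ᶠ s : ℝ in nhds x, |s| < R + 1 := continuous_abs.continuousAt.eventually_lt_const hx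
    filter_upwards [this] with s hs
    have : b s = 1 := b.one_of_mem_closedBall (by simpa [b] using hs.le)
    simp [h, this]
  have hh0 : ∀ x : ℝ, R + 2 < |x| → h =ᶠ[nhds x] fun _ => 0 := by
    intro x hx
    have : ∀ᶠ s : ℝ in nhds x, R + 2 < |s| := continuous_abs.continuousAt.eventually_const_lt hx
    filter_upwards [this] with s hs
    have : b s = 0 := b.zero_of_le_dist (by simpa [b] using hs.le)
    simp [h, this]
  -- the two flat pieces
  have hflat1 : Flat (fun z => dbar P z * (1 - Ψ z * E z)) := by
    intro N
    obtain ⟨C, hC⟩ := hloc N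
    obtain ⟨M, hM⟩ := hPb'
    have hM0 := (norm_nonneg _).trans (hM 0)
    refine ⟨M * |C|, fun z => ?_⟩
    rcases lt_or_ge (R + 1 / 2) ‖z‖ with hz | hz
    · simp only [hdP z hz, zero_mul, norm_zero]
      positivity
    · have h1 : Ψ z = 1 := hΨone z (by linarith)
      have h2 := hC z 1 (hh1 _ ((abs_re_le_norm z).trans_lt (by linarith)))
      beta_reduce
      rw [h1, one_mul, norm_mul, mul_assoc, norm_sub_rev]
      have h3 : C * |z.im| ^ N ≤ |C| * |z.im| ^ N := by gcongr; exact le_abs_self C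
      gcongr
      exacts [hM z, h2.trans h3]
  have hflat2 : Flat (fun z => E z * dbar Ψ z) := by
    intro N
    obtain ⟨C, hC⟩ := hloc N
    obtain ⟨M, hM⟩ := hΨb'
    obtain ⟨M', hM'⟩ := hE.bdd
    have hM0 := (norm_nonneg _).trans (hM 0)
    have hM0' := (norm_nonneg _).trans (hM' 0)
    refine ⟨|C| * M + M' * 2 ^ N * M, fun z => ?_⟩
    rcases lt_or_ge ‖z‖ (R + 3) with hz | hz
    · simp only [hdΨ z hz, mul_zero, norm_zero]
      positivity
    · have key : ‖E z‖ ≤ |C| * |z.im| ^ N + M' * 2 ^ N * |z.im| ^ N := by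
        rcases lt_or_ge (R + 2) |z.re| with hx | hx
        · have h2 := hC z 0 (hh0 _ hx)
          rw [sub_zero] at h2
          have h3 : C * |z.im| ^ N ≤ |C| * |z.im| ^ N := by gcongr; exact le_abs_self C
          have h4 : 0 ≤ M' * 2 ^ N * |z.im| ^ N := by positivity
          linarith
        · have h5 := norm_le_abs_re_add_abs_im z
          have h6 : 1 ≤ 2 * |z.im| := by linarith
          have h7 : 1 ≤ (2 * |z.im|) ^ N := one_le_pow₀ h6
          rw [mul_pow] at h7
          have h8 : M' ≤ M' * (2 ^ N * |z.im| ^ N) := le_mul_of_one_le_right hM0' h7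
          have h9 : 0 ≤ |C| * |z.im| ^ N := by positivity
          have := hM' z
          linarith
      rw [norm_mul]
      calc ‖E z‖ * ‖dbar Ψ z‖ ≤ (|C| * |z.im| ^ N + M' * 2 ^ N * |z.im| ^ N) * M := by
            gcongr
            exact hM z
        _ = _ := by ring
  have hPsub : Bdd (fun z => 1 - P z) := by
    obtain ⟨M, hM⟩ := hPb
    exact ⟨1 + M, fun z => (norm_sub_le _ _).trans (by simpa using hM z)⟩
  have hd1 : ∀ {u : ℂ → ℂ}, ContDiff ℝ 1 u → ∀ z, DifferentiableAt ℝ u z :=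
    fun hu z => (hu.differentiable one_ne_zero) z
  have hsm : ContDiff ℝ 1 (fun z => P z + (1 - P z) * (Ψ z * E z)) :=
    hP1.add ((contDiff_const.sub hP1).mul (hΨ1.mul hE.smooth))
  have hcs : HasCompactSupport (fun z => P z + (1 - P z) * (Ψ z * E z)) :=
    hPc.add ((hΨc.mul_right).mul_left)
  refine ⟨fun z => P z + (1 - P z) * (Ψ z * E z), ⟨hsm, ?_, ?_⟩, hcs, ?_, ?_⟩
  · exact bdd_of_compactSupport hsm.continuous hcs
  · have : dbar (fun z => P z + (1 - P z) * (Ψ z * E z)) = fun z =>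
        dbar P z * (1 - Ψ z * E z) + ((1 - P z) * (E z * dbar Ψ z) +
          (1 - P z) * (Ψ z * dbar E z)) := by
      funext z
      rw [dbar_add (hd1 hP1 z) (hd1 ((contDiff_const.sub hP1).mul (hΨ1.mul hE.smooth)) z),
        dbar_mul (hd1 (contDiff_const.sub hP1) z) (hd1 (hΨ1.mul hE.smooth) z),
        dbar_mul (hd1 hΨ1 z) (hE.diff z), dbar_one_sub]
      ring
    rw [this]
    exact hflat1.add ((hflat2.bdd_mul hPsub).add ((hE.flat.bdd_mul hΨb).bdd_mul hPsub))
  · intro z hz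
    simp [hPone z hz]
  · have : (fun x : ℝ => P x + (1 - P x) * (Ψ x * E x)) =
        fun x : ℝ => P x + (1 - P x) * (Ψ x * h x) := by
      funext x
      rw [hreal]
    rw [this]
    have e1 : ContDiff ℝ (⊤ : ℕ∞) (fun x : ℝ => P x) := hP.comp ofRealCLM.contDiff
    have e2 : ContDiff ℝ (⊤ : ℕ∞) (fun x : ℝ => Ψ x) := hΨ.comp ofRealCLM.contDiff
    exact e1.add ((contDiff_const.sub e1).mul (e2.mul hs))

/-! ### From functions in `𝓖` to extensions -/

lemma forward {f : ℝ → ℂ} (hf : MemG f) : ∃ F : ℂ → ℂ,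
      ContDiff ℝ 1 F ∧ (∃ M : ℝ, ∀ z : ℂ, ‖F z‖ ≤ M) ∧ (∀ x : ℝ, F x = f x) ∧
      HasCompactSupport (fun z : ℂ => dbar F z) ∧
      ∀ N : ℕ, ∃ C : ℝ, ∀ z : ℂ, ‖dbar F z‖ ≤ C * |z.im| ^ N := by
  obtain ⟨hfs, R, hR, g, hg, ⟨M, hM⟩, hgf⟩ := hf
  obtain ⟨φ, hφ, hφc, hφ1, hφs⟩ := exists_cutoff (R + 1) (by linarith)
  obtain ⟨R', hR'0, hR'⟩ : ∃ R' : ℝ, 0 < R' ∧ ∀ z ∈ tsupport φ, ‖z‖ ≤ R' :=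
    hφc.isCompact.isBounded.exists_pos_norm_le
  obtain ⟨φ', hφ', hφc', hφ1', -⟩ := exists_cutoff R' hR'0
  obtain ⟨m, m', hm⟩ := exists_mult
  let h : ℝ → ℂ := fun x => φ x * f x
  have hs : ContDiff ℝ (⊤ : ℕ∞) h := hφs.mul hfs
  have hc : HasCompactSupport h := by
    refine HasCompactSupport.intro (K := Set.Icc (-R') R') isCompact_Icc (fun x hx => ?_)
    have : (x : ℂ) ∉ tsupport φ := by
      intro hx'
      apply hx
      have := hR' _ hx'
      rw [norm_real, Real.norm_eq_abs] at this
      exact abs_le.1 this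
    simp [h, image_eq_zero_of_notMem_tsupport this]
  have hE := EE_AA (rapid_fourier hs hc) hm
  have hreal := EE_real hs hc hm
  set E := EE (FourierTransform.fourier h) m
  have hgd : ∀ z : ℂ, R < ‖z‖ → DifferentiableAt ℂ g z := fun z hz =>
    hg.differentiableAt ((isOpen_lt continuous_const continuous_norm).mem_nhds hz)
  have hzero : ∀ z : ℂ, ‖z‖ < R + 1 → (fun w => (1 - φ w) * g w) =ᶠ[nhds z] fun _ => 0 := by
    intro z hz
    have : ∀ᶠ w : ℂ in nhds z, ‖w‖ < R + 1 := continuous_norm.continuousAt.eventually_lt_const hz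
    filter_upwards [this] with w hw
    simp [hφ1 w hw.le]
  have hG : AA (fun z => (1 - φ z) * g z) := by
    refine ⟨?_, ?_, ?_⟩
    · rw [contDiff_iff_contDiffAt]
      intro z
      rcases lt_or_ge ‖z‖ (R + 1) with hz | hz
      · exact contDiffAt_const.congr_of_eventuallyEq (hzero z hz)
      · have hz' : R < ‖z‖ := by linarith
        have : ContDiffAt ℂ 1 g z :=
          (hg.analyticAt ((isOpen_lt continuous_const continuous_norm).mem_nhds hz')).contDiffAt
        exact (contDiffAt_const.sub hφ.smooth.contDiffAt).mul (this.restrict_scalars ℝ)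
    · obtain ⟨B, hB⟩ := hφ.bdd
      have hB0 := (norm_nonneg _).trans (hB 0)
      refine ⟨(1 + B) * |M|, fun z => ?_⟩
      rcases lt_or_ge ‖z‖ (R + 1) with hz | hz
      · rw [(hzero z hz).self_of_nhds, norm_zero]
        positivity
      · rw [norm_mul]
        have h1 := hM z (by linarith)
        have h2 : ‖1 - φ z‖ ≤ 1 + B := (norm_sub_le _ _).trans (by simpa using hB z)
        gcongr
        exact h1.trans (le_abs_self M)
    · refine hφ.flat.mono |M| (fun z => ?_)
      rcases lt_or_ge ‖z‖ (R + 1) with hz | hz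
      · rw [dbar_congr (hzero z hz), dbar_const, norm_zero]
        positivity
      · have hz' : R < ‖z‖ := by linarith
        have hd := hgd z hz'
        rw [dbar_mul (u := fun w => 1 - φ w) ((differentiableAt_const _).sub (hφ.diff z)) (hd.restrictScalars ℝ),
          dbar_holo hd, dbar_one_sub, mul_zero, add_zero, norm_mul, norm_neg, mul_comm]
        gcongr
        exact (hM z hz').trans (le_abs_self M)
  have hF := hG.add (hφ'.mul hE)
  refine ⟨fun z => (1 - φ z) * g z + φ' z * E z, hF.smooth, hF.bdd, ?_, ?_, hF.flat⟩
  · intro x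
    have h1 : (1 - φ x) * g x = (1 - φ x) * f x := by
      rcases lt_or_ge R |x| with hx | hx
      · rw [hgf x hx]
      · have : φ x = 1 := hφ1 x (by rw [norm_real, Real.norm_eq_abs]; linarith)
        simp [this]
    have h2 : φ' x * φ x = φ x := by
      by_cases hx : (x : ℂ) ∈ tsupport φ
      · rw [hφ1' x (hR' _ hx), one_mul]
      · rw [image_eq_zero_of_notMem_tsupport hx, mul_zero]
    have h3 : E x = φ x * f x := hreal x
    simp only [h1, h3]
    linear_combination f x * h2
  · refine HasCompactSupport.intro (hφc.isCompact.union hφc'.isCompact) (fun z hz => ?_)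
    rw [Set.mem_union, not_or] at hz
    have hz1 := notMem_tsupport_iff_eventuallyEq.1 hz.1
    have hz2 := notMem_tsupport_iff_eventuallyEq.1 hz.2
    have hzR : R < ‖z‖ := by
      by_contra hcon
      have h1 := hφ1 z (by linarith [not_lt.1 hcon])
      rw [hz1.self_of_nhds] at h1
      simp at h1
    have : (fun z => (1 - φ z) * g z + φ' z * E z) =ᶠ[nhds z] g := by
      filter_upwards [hz1, hz2] with w hw1 hw2
      simp [hw1, hw2]
    rw [dbar_congr this, dbar_holo (hgd z hzR)]

/-! ### From extensions to functions in `𝓖` -/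

/-- The horizontal line integral. -/
def JJ (v : ℂ → ℂ) (y : ℝ) : ℂ := ∫ x : ℝ, v (x + y * I)

lemma JJ_supp {v : ℂ → ℂ} {r : ℝ} (hr : ∀ z, v z ≠ 0 → ‖z‖ ≤ r) (x y : ℝ)
    (hx : x ∉ Set.Icc (-r) r) : v (x + y * I) = 0 := by
  by_contra hne
  apply hx
  have h1 := (abs_re_le_norm _).trans (hr _ hne)
  simp only [add_re, ofReal_re, mul_re, I_re, mul_zero, ofReal_im, I_im, mul_one, sub_self,
    add_zero] at h1
  exact abs_le.1 h1

lemma JJ_integrable {v : ℂ → ℂ} {r : ℝ} (hv : Continuous v) (hr : ∀ z, v z ≠ 0 → ‖z‖ ≤ r) (y : ℝ) :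
    Integrable (fun x : ℝ => v (x + y * I)) := by
  refine Continuous.integrable_of_hasCompactSupport (by fun_prop) ?_
  exact HasCompactSupport.intro (K := Set.Icc (-r) r) isCompact_Icc (fun x hx => JJ_supp hr x y hx)

lemma JJ_deriv {v : ℂ → ℂ} (hv : ContDiff ℝ 1 v) (hc : HasCompactSupport v) (y : ℝ) :
    HasDerivAt (JJ v) (-2 * I * ∫ x : ℝ, dbar v (x + y * I)) y := by
  have hd : Continuous (fderiv ℝ v) := hv.continuous_fderiv one_ne_zero
  have hdc : HasCompactSupport (fderiv ℝ v) := hc.fderiv ℝ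
  obtain ⟨B, hB⟩ := hdc.exists_bound_of_continuous hd
  have hB0 : 0 ≤ B := (norm_nonneg _).trans (hB 0)
  obtain ⟨r, hr0, hr⟩ : ∃ r : ℝ, 0 < r ∧ ∀ z ∈ tsupport v, ‖z‖ ≤ r :=
    hc.isCompact.isBounded.exists_pos_norm_le
  have hrv : ∀ z, v z ≠ 0 → ‖z‖ ≤ r := fun z hz => hr z (subset_tsupport v hz)
  have hrd : ∀ w : ℂ, ∀ z, fderiv ℝ v z w ≠ 0 → ‖z‖ ≤ r := by
    intro w z hz
    apply hr z
    apply support_fderiv_subset ℝ (f := v)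
    intro h0
    apply hz
    rw [h0]
    rfl
  have hdv : ∀ z, HasFDerivAt v (fderiv ℝ v z) z := fun z =>
    ((hv.differentiable one_ne_zero) z).hasFDerivAt
  have hcw : ∀ w : ℂ, Continuous (fun z => fderiv ℝ v z w) := fun w => by fun_prop
  have hx : ∀ x : ℝ, HasDerivAt (fun s : ℝ => v (s + y * I)) (fderiv ℝ v (x + y * I) 1) x := by
    intro x
    have h1 : HasDerivAt (fun s : ℝ => (s + y * I : ℂ)) 1 x :=
      ((hasDerivAt_id x).ofReal_comp).add_const _
    exact (hdv _).comp_hasDerivAt x h1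
  have hy : ∀ x t : ℝ, HasDerivAt (fun s : ℝ => v (x + s * I)) (fderiv ℝ v (x + t * I) I) t := by
    intro x t
    have h1 : HasDerivAt (fun s : ℝ => (x + s * I : ℂ)) I t := by
      simpa using (((hasDerivAt_id t).ofReal_comp).mul_const I).const_add (x : ℂ)
    exact (hdv _).comp_hasDerivAt t h1
  have h0 : ∫ x : ℝ, fderiv ℝ v (x + y * I) 1 = 0 :=
    integral_eq_zero_of_hasDerivAt_of_integrable hx (JJ_integrable (hcw 1) (hrd 1) y)
      (JJ_integrable hv.continuous hrv y)
  have hmain := (hasDerivAt_integral_of_dominated_loc_of_deriv_le (μ := volume) (s := Set.univ)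
    (F := fun (t : ℝ) (x : ℝ) => v (x + t * I))
    (F' := fun (t : ℝ) (x : ℝ) => fderiv ℝ v (x + t * I) I) (x₀ := y)
    (bound := (Set.Icc (-r) r).indicator (fun _ => B)) Filter.univ_mem
    (Filter.Eventually.of_forall fun t => (JJ_integrable hv.continuous hrv t).aestronglyMeasurable)
    (JJ_integrable hv.continuous hrv y) (JJ_integrable (hcw I) (hrd I) y).aestronglyMeasurable
    (Filter.Eventually.of_forall fun x t _ => ?_) ?_
    (Filter.Eventually.of_forall fun x t _ => hy x t)).2
  · refine hmain.congr_deriv ?_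
    have e : ∀ x : ℝ, dbar v (x + y * I) =
        (fderiv ℝ v (x + y * I) 1 + I * fderiv ℝ v (x + y * I) I) / 2 := fun x => rfl
    simp_rw [e]
    rw [integral_div, integral_add (JJ_integrable (hcw 1) (hrd 1) y)
      ((JJ_integrable (hcw I) (hrd I) y).const_mul I), h0, integral_const_mul]
    linear_combination (∫ x : ℝ, fderiv ℝ v (x + y * I) I) * I_mul_I
  · by_cases hxr : x ∈ Set.Icc (-r) r
    · rw [Set.indicator_of_mem hxr]
      refine (ContinuousLinearMap.le_opNorm _ _).trans ?_
      rw [norm_I, mul_one]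
      exact hB _
    · rw [Set.indicator_of_notMem hxr, JJ_supp (hrd I) x t hxr, norm_zero]
  · exact (integrable_indicator_iff measurableSet_Icc).2 (by simp)

open scoped FourierTransform in
lemma fourier_decay {u : ℂ → ℂ} (hu : AA u) (hc : HasCompactSupport u) (N : ℕ) :
    ∃ C : ℝ, ∀ ξ : ℝ, |ξ| ^ N * ‖𝓕 (fun x : ℝ => u x) ξ‖ ≤ C := by
  obtain ⟨r, hr0, hr⟩ : ∃ r : ℝ, 0 < r ∧ ∀ z ∈ tsupport u, ‖z‖ ≤ r :=
    hc.isCompact.isBounded.exists_pos_norm_le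
  have hru : ∀ z, u z ≠ 0 → ‖z‖ ≤ r := fun z hz => hr z (subset_tsupport u hz)
  obtain ⟨C, hC⟩ := hu.flat N
  set K : ℝ := ∫ x : ℝ, (Set.Icc (-r) r).indicator (fun _ => (1 : ℝ)) x with hK
  have hKi : Integrable ((Set.Icc (-r) r).indicator (fun _ => (1 : ℝ))) :=
    (integrable_indicator_iff measurableSet_Icc).2 (by simp)
  refine ⟨2 * (|C| * N.factorial * K) * (r + 1), fun ξ => ?_⟩
  let e : ℂ → ℂ := fun z => cexp (-2 * Real.pi * I * ξ * z)
  have he : Differentiable ℂ e := by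
    intro z
    exact ((differentiableAt_id).const_mul _).cexp
  let v : ℂ → ℂ := fun z => u z * e z
  have heR : ContDiff ℝ 1 e := (he.contDiff (n := 1)).restrict_scalars ℝ
  have hv : ContDiff ℝ 1 v := hu.smooth.mul heR
  have hvc : HasCompactSupport v := hc.mul_right
  have hvd : ∀ z, dbar v z = dbar u z * e z := by
    intro z
    rw [dbar_mul (hu.diff z) ((heR.differentiable one_ne_zero) z), dbar_holo (he z), mul_zero,
      add_zero]
  have hen : ∀ x y : ℝ, ‖e (x + y * I)‖ = Real.exp (2 * Real.pi * (y * ξ)) := by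
    intro x y
    simp only [e, norm_exp]
    congr 1
    simp
    ring
  have hJ0 : JJ v 0 = 𝓕 (fun x : ℝ => u x) ξ := by
    rw [Real.fourier_eq', JJ]
    congr 1
    funext x
    simp only [v, e, smul_eq_mul, RCLike.inner_apply, conj_trivial]
    push_cast
    rw [zero_mul, add_zero, mul_comm]
    congr 2
    ring
  have hdb : ∀ z, dbar u z ≠ 0 → ‖z‖ ≤ r := by
    intro z hz
    apply hr z
    by_contra hcon
    apply hz
    rw [dbar_congr (notMem_tsupport_iff_eventuallyEq.1 hcon)]
    exact dbar_const 0 z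
  -- pointwise bound
  have hpt : ∀ y : ℝ, y * ξ ≤ 0 → ∀ x : ℝ, ‖(ξ : ℂ) ^ N * dbar v (x + y * I)‖ ≤
      |C| * N.factorial * (Set.Icc (-r) r).indicator (fun _ => (1 : ℝ)) x := by
    intro y hy x
    by_cases hxr : x ∈ Set.Icc (-r) r
    · rw [Set.indicator_of_mem hxr, mul_one, hvd, norm_mul, norm_mul, hen, norm_pow, norm_real,
        Real.norm_eq_abs]
      have h1 := hC (x + y * I)
      have him : (x + y * I : ℂ).im = y := by simp
      rw [him] at h1
      have h2 : ‖dbar u (x + y * I)‖ ≤ |C| * |y| ^ N :=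
        h1.trans (by gcongr; exact le_abs_self C)
      have hpow := Real.pow_div_factorial_le_exp (|y| * |ξ|) (by positivity) N
      rw [div_le_iff₀ (by positivity)] at hpow
      have hyx : |y| * |ξ| = -(y * ξ) := by rw [← abs_mul, abs_of_nonpos hy]
      have hexp : Real.exp (2 * Real.pi * (y * ξ)) ≤ Real.exp (-(|y| * |ξ|)) := by
        apply Real.exp_le_exp.2
        rw [hyx]
        nlinarith [Real.pi_gt_three]
      calc |ξ| ^ N * (‖dbar u (x + y * I)‖ * Real.exp (2 * Real.pi * (y * ξ)))
          ≤ |ξ| ^ N * ((|C| * |y| ^ N) * Real.exp (-(|y| * |ξ|))) := by gcongr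
        _ = |C| * ((|y| * |ξ|) ^ N * Real.exp (-(|y| * |ξ|))) := by rw [mul_pow]; ring
        _ ≤ |C| * ((Real.exp (|y| * |ξ|) * N.factorial) * Real.exp (-(|y| * |ξ|))) := by gcongr
        _ = |C| * N.factorial * (Real.exp (|y| * |ξ|) * Real.exp (-(|y| * |ξ|))) := by ring
        _ = _ := by rw [← Real.exp_add, add_neg_cancel, Real.exp_zero, mul_one]
    · rw [Set.indicator_of_notMem hxr, mul_zero, hvd, JJ_supp hdb x y hxr]
      simp
  have hder : ∀ y ∈ {y : ℝ | y * ξ ≤ 0}, HasDerivWithinAt (fun y => (ξ : ℂ) ^ N * JJ v y)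
      ((ξ : ℂ) ^ N * (-2 * I * ∫ x : ℝ, dbar v (x + y * I))) {y : ℝ | y * ξ ≤ 0} y := fun y _ =>
    ((JJ_deriv hv hvc y).const_mul _).hasDerivWithinAt
  have hbd : ∀ y ∈ {y : ℝ | y * ξ ≤ 0},
      ‖(ξ : ℂ) ^ N * (-2 * I * ∫ x : ℝ, dbar v (x + y * I))‖ ≤ 2 * (|C| * N.factorial * K) := by
    intro y hy
    have e1 : (ξ : ℂ) ^ N * (-2 * I * ∫ x : ℝ, dbar v (x + y * I)) =
        -2 * I * ∫ x : ℝ, (ξ : ℂ) ^ N * dbar v (x + y * I) := by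
      rw [integral_const_mul]; ring
    rw [e1, norm_mul]
    have e2 : ‖(-2 * I : ℂ)‖ = 2 := by simp
    rw [e2, hK, ← integral_const_mul]
    gcongr
    exact norm_integral_le_of_norm_le (hKi.const_mul _) (Filter.Eventually.of_forall (hpt y hy))
  have hconv : Convex ℝ {y : ℝ | y * ξ ≤ 0} :=
    convex_halfSpace_le (f := fun y : ℝ => y * ξ)
      ⟨fun a b => add_mul a b ξ, fun c a => by simp [mul_assoc]⟩ 0
  obtain ⟨y0, hy0, hy0a⟩ : ∃ y0 : ℝ, y0 * ξ ≤ 0 ∧ |y0| = r + 1 := by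
    rcases le_total 0 ξ with h | h
    · refine ⟨-(r + 1), by nlinarith, ?_⟩
      rw [abs_neg, abs_of_pos (by linarith)]
    · exact ⟨r + 1, by nlinarith, abs_of_pos (by linarith)⟩
  have hJy0 : JJ v y0 = 0 := by
    have : ∀ x : ℝ, v (x + y0 * I) = 0 := by
      intro x
      by_contra hne
      have h1 := hru _ (left_ne_zero_of_mul hne)
      have h2 := abs_im_le_norm (x + y0 * I)
      have him : (x + y0 * I : ℂ).im = y0 := by simp
      rw [him, hy0a] at h2
      linarith
    simp [JJ, this]
  have hmv := hconv.norm_image_sub_le_of_norm_hasDerivWithin_le hder hbd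
    (x := y0) (y := 0) hy0 (by simp)
  rw [hJy0, mul_zero, sub_zero, hJ0, norm_mul, norm_pow, norm_real, zero_sub, norm_neg,
    Real.norm_eq_abs, Real.norm_eq_abs, hy0a] at hmv
  exact hmv

open scoped FourierTransform in
lemma smooth_of_AA {u : ℂ → ℂ} (hu : AA u) (hc : HasCompactSupport u) :
    ContDiff ℝ (⊤ : ℕ∞) (fun x : ℝ => u x) := by
  set k : ℝ → ℂ := fun x => u x with hk
  have hkc : Continuous k := hu.smooth.continuous.comp continuous_ofReal
  have hks : HasCompactSupport k :=
    hc.comp_isClosedEmbedding isometry_ofReal.isClosedEmbedding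
  have hki : Integrable k := hkc.integrable_of_hasCompactSupport hks
  have hFc : Continuous (𝓕 k) :=
    VectorFourier.fourierIntegral_continuous Real.continuous_fourierChar
      (by exact continuous_inner) hki
  have hIntg : ∀ n : ℕ, Integrable (fun ξ : ℝ => ‖ξ‖ ^ n * ‖𝓕 k ξ‖) := by
    intro n
    obtain ⟨C, hC⟩ := fourier_decay hu hc n
    obtain ⟨D, hD⟩ := fourier_decay hu hc (n + 2)
    refine Integrable.mono' (integrable_inv_one_add_sq.const_mul (C + D))
      (Continuous.aestronglyMeasurable (by fun_prop)) (Filter.Eventually.of_forall fun ξ => ?_)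
    rw [Real.norm_of_nonneg (by positivity), Real.norm_eq_abs, ← div_eq_mul_inv,
      le_div_iff₀ (by positivity)]
    have h1 := hC ξ
    have h2 := hD ξ
    rw [pow_add, sq_abs] at h2
    calc _ = |ξ| ^ n * ‖𝓕 k ξ‖ + |ξ| ^ n * ξ ^ 2 * ‖𝓕 k ξ‖ := by ring
      _ ≤ C + D := add_le_add h1 h2
  have hFi : Integrable (𝓕 k) := by
    have := hIntg 0
    simp only [pow_zero, one_mul] at this
    exact (integrable_norm_iff hFc.aestronglyMeasurable).1 this
  have hinv : 𝓕⁻ (𝓕 k) = k := hkc.fourierInv_fourier_eq hki hFi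
  have hcd : ContDiff ℝ (⊤ : ℕ∞) (𝓕 (𝓕 k)) := Real.contDiff_fourier (fun n _ => hIntg n)
  have : k = fun x => 𝓕 (𝓕 k) (-x) := by
    funext x
    rw [← Real.fourierInv_eq_fourier_neg, hinv]
  rw [this]
  exact hcd.comp contDiff_neg

lemma backward {f : ℝ → ℂ} {F : ℂ → ℂ} (hF : AA F) (hr : ∀ x : ℝ, F x = f x)
    (hc : HasCompactSupport (dbar F)) : MemG f := by
  refine ⟨?_, ?_⟩
  · rw [contDiff_iff_contDiffAt]
    intro x
    obtain ⟨φ, hφ, hφc, hφ1, -⟩ := exists_cutoff (|x| + 1) (by positivity)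
    have h1 := smooth_of_AA (hφ.mul hF) hφc.mul_right
    refine h1.contDiffAt.congr_of_eventuallyEq ?_
    have : ∀ᶠ s : ℝ in nhds x, |s| < |x| + 1 :=
      continuous_abs.continuousAt.eventually_lt_const (lt_add_one _)
    filter_upwards [this] with s hs
    rw [hφ1 s (by rw [norm_real, Real.norm_eq_abs]; exact hs.le), one_mul, hr]
  · obtain ⟨R, hR0, hR⟩ : ∃ r : ℝ, 0 < r ∧ ∀ z ∈ tsupport (dbar F), ‖z‖ ≤ r :=
      hc.isCompact.isBounded.exists_pos_norm_le
    obtain ⟨M, hM⟩ := hF.bdd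
    refine ⟨R, hR0, F, fun z hz => ?_, ⟨M, fun z _ => hM z⟩, fun x _ => hr x⟩
    refine (holo_of_dbar (hF.diff z) ?_).differentiableWithinAt
    by_contra hne
    exact absurd (hR z (subset_tsupport _ hne)) (not_le.2 hz)

/-- Proposition 10.2: a continuous function `f` on `ℝ` belongs to `𝓖` iff it has a
bounded `C¹` extension `F` to `ℂ` such that `∂F/∂z̄` has compact support and
`∂F/∂z̄ = O(|Im z|^N)` for every `N`. -/
theorem memG_iff_extension (f : ℝ → ℂ) (hf : Continuous f) :
    MemG f ↔ ∃ F : ℂ → ℂ,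
      ContDiff ℝ 1 F ∧ (∃ M : ℝ, ∀ z : ℂ, ‖F z‖ ≤ M) ∧ (∀ x : ℝ, F x = f x) ∧
      HasCompactSupport (fun z : ℂ => dbar F z) ∧
      ∀ N : ℕ, ∃ C : ℝ, ∀ z : ℂ, ‖dbar F z‖ ≤ C * |z.im| ^ N := by

  constructor
  · exact forward
  · rintro ⟨F, h1, h2, h3, h4, h5⟩
    exact backward ⟨h1, h2, h5⟩ h3 h4
end
end

section
/- Let f̃ : ℂ → ℂ be bounded and continuously differentiable with: (i) for every N ∈ ℕ there is C_N such that |∂f̃/∂z̄(z)| ≤ C_N·(|Im z|/⟨z⟩²)^N for all z ∈ ℂ, and (ii) the total (real) derivative of f̃ satisfies ‖Df̃(z)‖ ≤ C·⟨z⟩^{−2}. Let f = f̃|_ℝ and let K be the closure of f(ℝ) in ℂ. Let g̃ : ℂ → ℂ be bounded, Lipschitz and continuously differentiable, satisfying: for every N ∈ ℕ there is C_N with |∂g̃/∂ζ̄(ζ)| ≤ C_N·dist(ζ, K)^N for all ζ ∈ ℂ. Then h̃ := g̃ ∘ f̃ is a bounded extension of g̃∘f, satisfies ‖Dh̃(z)‖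 ≤ C'·⟨z⟩^{−2}, and for every N ∈ ℕ there is C'_N with |∂h̃/∂z̄(z)| ≤ C'_N·(|Im z|/⟨z⟩²)^N for all z ∈ ℂ. -/
open MeasureTheory Complex

noncomputable section

/-- The Japanese bracket `⟨z⟩ = (1 + |z|²)^{1/2}`. -/
def jap (z : ℂ) : ℝ := Real.sqrt (1 + ‖z‖ ^ 2)

lemma jap_sq (z : ℂ) : jap z ^ 2 = 1 + z.re ^ 2 + z.im ^ 2 := by
  unfold jap
  rw [Real.sq_sqrt (by positivity), Complex.sq_norm, Complex.normSq_apply]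
  ring

/-- A real-linear map of `ℂ` splits into its linear and antilinear parts. -/
lemma real_linear_split (A : ℂ →L[ℝ] ℂ) (w : ℂ) :
    A w = (A 1 - I * A I) / 2 * w + (A 1 + I * A I) / 2 * (starRingEnd ℂ) w := by
  have h : A w = w.re * A 1 + w.im * A I := by
    have : w = w.re • (1 : ℂ) + w.im • I := by
      apply Complex.ext <;> simp
    conv_lhs => rw [this]
    rw [map_add, map_smul, map_smul]
    simp
  rw [h]
  have h1 : w = w.re + w.im * I := (Complex.re_add_im w).symm
  have h2 : (starRingEnd ℂ) w = w.re - w.im * I := by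
    apply Complex.ext <;> simp
  rw [h2]
  conv_rhs => rw [show (A 1 - I * A I) / 2 * w =
    (A 1 - I * A I) / 2 * (w.re + w.im * I) by rw [← h1]]
  linear_combination ((w.im : ℂ) * A I) * Complex.I_sq

lemma dbar_comp_bound (F G : ℂ → ℂ) (z : ℂ) (hF : DifferentiableAt ℝ F z)
    (hG : DifferentiableAt ℝ G (F z)) :
    ‖dbar (fun w : ℂ => G (F w)) z‖ ≤
      ‖fderiv ℝ G (F z)‖ * ‖dbar F z‖ + ‖dbar G (F z)‖ * ‖fderiv ℝ F z‖ := by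
  have hc : fderiv ℝ (fun w : ℂ => G (F w)) z = (fderiv ℝ G (F z)).comp (fderiv ℝ F z) :=
    fderiv_comp z hG hF
  unfold dbar
  rw [hc]
  generalize fderiv ℝ G (F z) = A
  generalize fderiv ℝ F z = B
  simp only [ContinuousLinearMap.comp_apply]
  have h1 : ‖A 1‖ ≤ ‖A‖ := by simpa using A.le_opNorm 1
  have h2 : ‖A I‖ ≤ ‖A‖ := by simpa using A.le_opNorm I
  have h3 : ‖B 1‖ ≤ ‖B‖ := by simpa using B.le_opNorm 1
  have h4 : ‖B I‖ ≤ ‖B‖ := by simpa using B.le_opNorm I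
  have key : (A (B 1) + I * A (B I)) / 2 =
      (A 1 - I * A I) / 2 * ((B 1 + I * B I) / 2) +
      (A 1 + I * A I) / 2 * (((starRingEnd ℂ) (B 1) + I * (starRingEnd ℂ) (B I)) / 2) := by
    rw [real_linear_split A (B 1), real_linear_split A (B I)]
    ring
  rw [key]
  have ha : ‖(A 1 - I * A I) / 2‖ ≤ ‖A‖ := by
    have := norm_sub_le (A 1) (I * A I)
    simp only [norm_mul, Complex.norm_I, one_mul] at this
    rw [norm_div, Complex.norm_ofNat]
    linarith
  have hb : ‖((starRingEnd ℂ) (B 1) + I * (starRingEnd ℂ) (B I)) / 2‖ ≤ ‖B‖ := by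
    have := norm_add_le ((starRingEnd ℂ) (B 1)) (I * (starRingEnd ℂ) (B I))
    simp only [norm_mul, Complex.norm_I, one_mul, RCLike.norm_conj] at this
    rw [norm_div, Complex.norm_ofNat]
    linarith
  refine (norm_add_le _ _).trans ?_
  rw [norm_mul, norm_mul]
  gcongr

lemma infDist_bound (F : ℂ → ℂ) (hF : Differentiable ℝ F) (C : ℝ) (hC : 0 ≤ C)
    (hFD : ∀ z : ℂ, ‖fderiv ℝ F z‖ ≤ C / jap z ^ 2) (z : ℂ) :
    Metric.infDist (F z) (closure (Set.range fun x : ℝ => F x)) ≤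
      4 * C * (|z.im| / jap z ^ 2) := by
  obtain ⟨e, he, hx⟩ : ∃ e : ℝ, e ^ 2 = 1 ∧ 0 ≤ e * z.re := by
    rcases le_total 0 z.re with h | h
    · exact ⟨1, by norm_num, by linarith⟩
    · exact ⟨-1, by norm_num, by linarith⟩
  have habs : |e| = 1 := by
    rw [← sq_abs] at he
    nlinarith [abs_nonneg e]
  set r : ℝ := z.re + e * |z.im| with hr
  have hz : 0 < jap z ^ 2 := by rw [jap_sq]; positivity
  have hseg : ∀ w ∈ segment ℝ z (r : ℂ), ‖fderiv ℝ F w‖ ≤ 2 * C / jap z ^ 2 := by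
    rintro w ⟨a, b, ha, hb, hab, rfl⟩
    have hw : jap z ^ 2 / 2 ≤ jap (a • z + b • (r : ℂ)) ^ 2 := by
      rw [jap_sq, jap_sq]
      have h1 : (a • z + b • (r : ℂ)).re = z.re + b * e * |z.im| := by
        simp [hr]; linear_combination z.re * hab
      have h2 : (a • z + b • (r : ℂ)).im = a * z.im := by simp
      rw [h1, h2]
      have h3 : 0 ≤ b * |z.im| * (e * z.re) := by positivity
      have h4 : (z.re + b * e * |z.im|) ^ 2 =
          z.re ^ 2 + 2 * (b * |z.im| * (e * z.re)) + b ^ 2 * z.im ^ 2 := by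
        linear_combination (b ^ 2 * |z.im| ^ 2) * he + b ^ 2 * sq_abs z.im
      have h5 : 1 / 2 ≤ a ^ 2 + b ^ 2 := by nlinarith [sq_nonneg (a - b)]
      nlinarith [mul_le_mul_of_nonneg_right h5 (sq_nonneg z.im), sq_nonneg z.re]
    calc _ ≤ C / jap (a • z + b • (r : ℂ)) ^ 2 := hFD _
      _ ≤ C / (jap z ^ 2 / 2) := by gcongr
      _ = _ := by field_simp
  have hmv := (convex_segment z (r : ℂ)).norm_image_sub_le_of_norm_fderiv_le
    (fun w _ => hF w) hseg (right_mem_segment ℝ _ _) (left_mem_segment ℝ _ _)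
  have hlen : ‖z - (r : ℂ)‖ ≤ 2 * |z.im| := by
    have := Complex.norm_le_abs_re_add_abs_im (z - (r : ℂ))
    have h1 : |(z - (r : ℂ)).re| = |z.im| := by simp [hr, abs_mul, habs]
    have h2 : (z - (r : ℂ)).im = z.im := by simp
    rw [h1, h2] at this
    linarith
  have hmem : F r ∈ closure (Set.range fun x : ℝ => F x) := subset_closure ⟨r, rfl⟩
  calc _ ≤ dist (F z) (F r) := Metric.infDist_le_dist_of_mem hmem
    _ = ‖F z - F r‖ := dist_eq_norm _ _
    _ ≤ _ := hmv
    _ ≤ 2 * C / jap z ^ 2 * (2 * |z.im|) := by gcongr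
    _ = _ := by ring

/-- Section 12, (12.14)–(12.15): if `f̃` is a bounded `C¹` extension with
`∂f̃/∂z̄ = O((|Im z|/⟨z⟩²)^N)` and `Df̃ = O(⟨z⟩^{-2})`, `K = closure f(ℝ)`, and
`g̃` is bounded, Lipschitz and `C¹` with `∂g̃/∂ζ̄ = O(dist(ζ,K)^∞)`, then
`h̃ = g̃ ∘ f̃` is a bounded extension of `g ∘ f` with `Dh̃ = O(⟨z⟩^{-2})` and
`∂h̃/∂z̄ = O((|Im z|/⟨z⟩²)^N)` for every `N`. -/
theorem composed_extension (F : ℂ → ℂ)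
    (hF1 : ContDiff ℝ 1 F)
    (hFb : ∃ M : ℝ, ∀ z : ℂ, ‖F z‖ ≤ M)
    (hFdbar : ∀ N : ℕ, ∃ C : ℝ, ∀ z : ℂ, ‖dbar F z‖ ≤ C * (|z.im| / jap z ^ 2) ^ N)
    (hFD : ∃ C : ℝ, ∀ z : ℂ, ‖fderiv ℝ F z‖ ≤ C / jap z ^ 2)
    (G : ℂ → ℂ)
    (hG1 : ContDiff ℝ 1 G)
    (hGb : ∃ M : ℝ, ∀ ζ : ℂ, ‖G ζ‖ ≤ M)
    (hGlip : ∃ L : NNReal, LipschitzWith L G)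
    (hGdbar : ∀ N : ℕ, ∃ C : ℝ, ∀ ζ : ℂ,
      ‖dbar G ζ‖ ≤ C * (Metric.infDist ζ (closure (Set.range fun x : ℝ => F x))) ^ N) :
    (∃ M : ℝ, ∀ z : ℂ, ‖G (F z)‖ ≤ M) ∧
    (∃ C' : ℝ, ∀ z : ℂ, ‖fderiv ℝ (fun w : ℂ => G (F w)) z‖ ≤ C' / jap z ^ 2) ∧
    (∀ N : ℕ, ∃ C' : ℝ, ∀ z : ℂ,
      ‖dbar (fun w : ℂ => G (F w)) z‖ ≤ C' * (|z.im| / jap z ^ 2) ^ N) := by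
  obtain ⟨C₀, hC₀⟩ := hFD
  obtain ⟨L, hL⟩ := hGlip
  have hF := hF1.differentiable one_ne_zero
  have hG := hG1.differentiable one_ne_zero
  have hjap : ∀ z, 1 ≤ jap z ^ 2 := fun z => by
    rw [jap_sq]; nlinarith [sq_nonneg z.re, sq_nonneg z.im]
  have hDG : ∀ w, ‖fderiv ℝ G w‖ ≤ L := fun w => norm_fderiv_le_of_lipschitz ℝ hL
  have hC : 0 ≤ C₀ := by
    have h := (norm_nonneg _).trans (hC₀ 0)
    have h1 := hjap 0
    by_contra hneg
    exact absurd h (not_le.mpr (div_neg_of_neg_of_pos (not_le.mp hneg) (by linarith)))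
  refine ⟨?_, ⟨L * C₀, fun z => ?_⟩, fun N => ?_⟩
  · obtain ⟨M, hM⟩ := hGb
    exact ⟨M, fun z => hM _⟩
  · have hc : fderiv ℝ (fun w : ℂ => G (F w)) z = (fderiv ℝ G (F z)).comp (fderiv ℝ F z) :=
      fderiv_comp z (hG _) (hF _)
    rw [hc, mul_div_assoc]
    refine (ContinuousLinearMap.opNorm_comp_le _ _).trans ?_
    exact mul_le_mul (hDG _) (hC₀ z) (norm_nonneg _) L.2
  · obtain ⟨C₁, hC₁⟩ := hFdbar N
    obtain ⟨C₂, hC₂⟩ := hGdbar N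
    refine ⟨L * C₁ + |C₂| * (4 * C₀) ^ N * C₀, fun z => ?_⟩
    have hd := infDist_bound F hF C₀ hC hC₀ z
    have h0 : 0 ≤ |z.im| / jap z ^ 2 := by have := hjap z; positivity
    have hDF : ‖fderiv ℝ F z‖ ≤ C₀ := (hC₀ z).trans (div_le_self hC (hjap z))
    have hgb : ‖dbar G (F z)‖ ≤ |C₂| * (4 * C₀ * (|z.im| / jap z ^ 2)) ^ N := by
      refine (hC₂ (F z)).trans ?_
      have := Metric.infDist_nonneg (x := F z) (s := closure (Set.range fun x : ℝ => F x))
      gcongr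
      exact le_abs_self _
    calc _ ≤ _ := dbar_comp_bound F G z (hF _) (hG _)
      _ ≤ L * (C₁ * (|z.im| / jap z ^ 2) ^ N) +
          |C₂| * (4 * C₀ * (|z.im| / jap z ^ 2)) ^ N * C₀ := by
        apply add_le_add
        · exact mul_le_mul (hDG _) (hC₁ z) (norm_nonneg _) L.2
        · exact mul_le_mul hgb hDF (norm_nonneg _) ((norm_nonneg _).trans hgb)
      _ = _ := by rw [mul_pow (4 * C₀)]; ring
end
end
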